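/- For every j ∈ ℕ there exists a real polynomial P with deg P < j (in particular P = 0 when j = 0) such that for every k ≥ j one has a_{k,j} = (1/j!)·(k/4)^j + P(k). -/

import Mathlib

open Finset

noncomputable section

/-- The generating set `S = {(1,0),(-1,0),(0,1),(0,-1)}` of ℤ². -/
def Sfin : Finset (ℤ × ℤ) := {(1,0), (-1,0), (0,1), (0,-1)}

/-- `Q u n = E |u(S_n)|²` for the simple random walk on ℤ² started at 0. -/
noncomputable def Q (u : ℤ × ℤ → ℂ) (n : ℕ) : ℝ :=
  (4 : ℝ)⁻¹ ^ n * ∑ s ∈ Fintype.piFinset (fun _ : Fin n => Sfin), ‖u (∑ i, s i)‖ ^ 2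

/-- Generalized binomial coefficient `binom(x,k) = (1/k!)·∏_{j<k}(x-j)`. -/
noncomputable def gbinom (x : ℝ) (k : ℕ) : ℝ :=
  (∏ j ∈ Finset.range k, (x - j)) / (Nat.factorial k)

/-- `F_k(x) = binom(x + (k-1)/2, k)`, a discretization of `x^k/k!`. -/
noncomputable def F (k : ℕ) (x : ℝ) : ℝ := gbinom (x + ((k : ℝ) - 1) / 2) k

/-- `Z_k(x,y) = Σ_{l=0}^k i^l F_{k-l}(x) F_l(y)`, a harmonic discretization of `z^k/k!`. -/
noncomputable def Z (k : ℕ) (x y : ℝ) : ℂ :=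
  ∑ l ∈ Finset.range (k + 1), Complex.I ^ l * (F (k - l) x : ℂ) * (F l y : ℂ)

/-- `Q_k := Q_{Z_k}` (with `Z_k` restricted to ℤ²). -/
noncomputable def Qk (k : ℕ) (n : ℕ) : ℝ := Q (fun p => Z k p.1 p.2) n

/-- Forward difference operator: `fwd f n = f (n+1) - f n`. -/
def fwd (f : ℕ → ℝ) : ℕ → ℝ := fun n => f (n + 1) - f n

/-- Newton coefficients `a_{k,j} = Q_k^{(k-j)}(0)`. -/
noncomputable def a (k j : ℕ) : ℝ := fwd^[k - j] (Qk k) 0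

/-!
The generating function `∑ₖ F_k(x) Xᵏ` satisfies a central difference equation, whose solutions with
polynomial coefficients are determined by their value at `0`; hence translating `x` by `h`
multiplies it by a series `e_h` not depending on `x`, with `e_{1/2} - e_{-1/2} = X`. The generating
function `𝓖(x, y) = ∑ Z_k(x, y) conj(Z_l(x, y)) sᵏ tˡ` is therefore an eigenvector of all
translations. If `λ_h` denotes the factor by which averaging over the four translates by `(±h, 0)`
and `(0, ±h)` multiplies `𝓖`, then `E 𝓖(S_n) = λ₁ⁿ 𝓖(0, 0)`.

The half-step relation gives `λ₁ - 1 = s t λ_{1/2}`, so the Newton coefficient `a_{k,j}` is the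
coefficient of `sʲ tʲ` in `λ_{1/2}^{k-j} 𝓖(0, 0)`. As `λ_{1/2} = 1 + s t / 4` up to terms of total
degree at least `3`, expanding the power binomially leaves only the terms
`(k-j choose i) (λ_{1/2} - 1)ⁱ 𝓖(0, 0)` with `i ≤ j`, and the one with `i = j` contributes
`4⁻ʲ (k-j choose j)`.
-/

open scoped PowerSeries Polynomial

lemma eval_eq_eval_of_periodic {K : Type*} [Field K] [CharZero K] {p : K[X]}
    (hp : Function.Periodic (fun x ↦ p.eval x) 1) (x y : K) : p.eval x = p.eval y := by
  have hconst : p = Polynomial.C (p.eval 0) := by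
    refine Polynomial.eq_of_infinite_eval_eq _ _
      ((Set.infinite_range_of_injective (Nat.cast_injective (R := K))).mono ?_)
    rintro _ ⟨n, rfl⟩
    simpa using hp.nat_mul_eq n
  rw [hconst, Polynomial.eval_C, Polynomial.eval_C]

lemma eq_zero_of_centralDiff_eq_X_mul {K : Type*} [Field K] [CharZero K] {Φ : K → K⟦X⟧}
    (hpoly : ∀ k, ∃ p : K[X], ∀ x, p.eval x = PowerSeries.coeff k (Φ x))
    (hdiff : ∀ x, Φ (x + 1 / 2) - Φ (x - 1 / 2) = PowerSeries.X * Φ x) (hzero : Φ 0 = 0) (x : K) :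
    Φ x = 0 := by
  -- Where the right-hand side vanishes, the coefficient is a periodic polynomial, hence constant.
  have coeff_eq_zero_of_rhs (k : ℕ) (h : ∀ x, PowerSeries.coeff k (PowerSeries.X * Φ x) = 0)
      (x : K) : PowerSeries.coeff k (Φ x) = 0 := by
    obtain ⟨p, hp⟩ := hpoly k
    have hper : Function.Periodic (fun x ↦ p.eval x) 1 := fun x ↦ by
      have := congrArg (PowerSeries.coeff k) (hdiff (x + 1 / 2))
      rw [h, map_sub, add_assoc, add_halves, add_sub_cancel_right, sub_eq_zero] at this
      simpa only [hp] using this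
    rw [← hp, eval_eq_eval_of_periodic hper x 0, hp, hzero, map_zero]
  ext k
  induction k generalizing x with
  | zero => exact coeff_eq_zero_of_rhs 0 (fun _ ↦ PowerSeries.coeff_zero_X_mul _) x
  | succ k ih =>
    exact coeff_eq_zero_of_rhs _ (fun y ↦ (PowerSeries.coeff_succ_X_mul k _).trans (ih y)) x

lemma mul_sq_add_mul_sq_of_mul_eq_one {R : Type*} [CommRing R] {u u' v v' : R}
    (hu : u * u' = 1) (hv : v * v' = 1) :
    (u * v) ^ 2 + (u' * v') ^ 2 =
      (u - u') * (v - v') * (u * v + u' * v') + (u - u') ^ 2 + (v - v') ^ 2 + 2 := by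
  linear_combination (u ^ 2 + u' ^ 2) * hv + (v ^ 2 + v' ^ 2 - 2 * (v * v' - 1)) * hu

section

variable {M R : Type*} [AddCommMonoid M] [CommSemiring R] {S : Finset M} {f ψ : M → R}

lemma map_sum_eq_prod_mul (hf : ∀ v, ∀ t ∈ S, f (v + t) = ψ t * f v) {ι : Type*}
    (u : Finset ι) {s : ι → M} (hs : ∀ i ∈ u, s i ∈ S) :
    f (∑ i ∈ u, s i) = (∏ i ∈ u, ψ (s i)) * f 0 := by
  classical
  induction u using Finset.induction_on with
  | empty => simp
  | insert i u hi ih =>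
    rw [sum_insert hi, prod_insert hi, add_comm, hf _ _ (hs i (mem_insert_self i u)),
      ih fun j hj ↦ hs j (mem_insert_of_mem hj), mul_assoc]

lemma sum_piFinset_map_sum (hf : ∀ v, ∀ t ∈ S, f (v + t) = ψ t * f v) (n : ℕ) :
    ∑ s ∈ Fintype.piFinset (fun _ : Fin n ↦ S), f (∑ i, s i) = (∑ t ∈ S, ψ t) ^ n * f 0 := by
  calc ∑ s ∈ Fintype.piFinset (fun _ : Fin n ↦ S), f (∑ i, s i)
      = ∑ s ∈ Fintype.piFinset (fun _ : Fin n ↦ S), (∏ i, ψ (s i)) * f 0 :=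
        sum_congr rfl fun s hs ↦
          map_sum_eq_prod_mul hf univ fun i _ ↦ Fintype.mem_piFinset.1 hs i
    _ = (∑ t ∈ S, ψ t) ^ n * f 0 := by
        rw [← sum_mul, ← prod_univ_sum]; simp

end

lemma fwd_iterate_map_pow_mul {R : Type*} [CommRing R] (L : R →+ ℝ) (x g : R) (m : ℕ) :
    fwd^[m] (fun n ↦ L (x ^ n * g)) = fun n ↦ L (x ^ n * ((x - 1) ^ m * g)) := by
  induction m with
  | zero => simp
  | succ m ih =>
    rw [Function.iterate_succ_apply', ih]
    funext n
    rw [fwd, ← map_sub]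
    congr 1
    ring

lemma exists_polynomial_eval_eq_choose_sub {K : Type*} [Field K] [CharZero K]
    (i j : ℕ) :
    ∃ P ∈ Polynomial.degreeLT K i, ∀ k : ℕ, j ≤ k →
      ((k - j).choose i : K) = (i.factorial : K)⁻¹ * (k : K) ^ i + P.eval (k : K) := by
  set p : K[X] := (descPochhammer K i).comp (Polynomial.X - Polynomial.C (j : K)) with hp
  have hmonic : p.Monic := (monic_descPochhammer K i).comp_X_sub_C _
  have hdeg : p.degree = i := by
    rw [Polynomial.degree_eq_natDegree hmonic.ne_zero, hp, Polynomial.natDegree_comp,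
      descPochhammer_natDegree, Polynomial.natDegree_X_sub_C, mul_one]
  refine ⟨(i.factorial : K)⁻¹ • (p - Polynomial.X ^ i),
    Submodule.smul_mem _ _ (Polynomial.mem_degreeLT.2 ?_), fun k hjk ↦ ?_⟩
  · rw [← hdeg]
    exact Polynomial.degree_sub_lt_left (by rw [hdeg, Polynomial.degree_X_pow]) hmonic.ne_zero
      (by rw [hmonic.leadingCoeff, Polynomial.leadingCoeff_X_pow])
  · rw [Nat.cast_choose_eq_descPochhammer_div, Nat.cast_sub hjk]
    simp only [hp, Polynomial.eval_smul, Polynomial.eval_sub, Polynomial.eval_C,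
      Polynomial.eval_pow, Polynomial.eval_X, Polynomial.eval_comp, smul_eq_mul]
    ring

lemma exists_polynomial_eval_eq_sum_choose_sub_mul {K : Type*} [Field K] [CharZero K]
    (j : ℕ) (d : ℕ → K) :
    ∃ P ∈ Polynomial.degreeLT K j, ∀ k : ℕ, j ≤ k →
      ∑ i ∈ range (j + 1), ((k - j).choose i : K) * d i =
        d j / j.factorial * (k : K) ^ j + P.eval (k : K) := by
  choose p hdeg hp using fun i ↦ exists_polynomial_eval_eq_choose_sub (K := K) i j
  refine ⟨∑ i ∈ range j, d i • ((i.factorial : K)⁻¹ • Polynomial.X ^ i + p i) + d j • p j,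
    ?_, fun k hjk ↦ ?_⟩
  · refine add_mem (sum_mem fun i hi ↦ Submodule.smul_mem _ _ (add_mem ?_ ?_))
      (Submodule.smul_mem _ _ (hdeg j))
    · refine Submodule.smul_mem _ _ (Polynomial.mem_degreeLT.2 ?_)
      rw [Polynomial.degree_X_pow]
      exact_mod_cast mem_range.1 hi
    · exact Polynomial.degreeLT_mono (mem_range.1 hi).le (hdeg i)
  · rw [sum_range_succ]
    simp only [hp _ k hjk, Polynomial.eval_add, Polynomial.eval_finsetSum, Polynomial.eval_smul,
      Polynomial.eval_pow, Polynomial.eval_X, smul_eq_mul, mul_comm (d _)]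
    ring

/-! ### The generating function of the polynomials `F_k` -/

lemma gbinom_eq_descPochhammer (x : ℝ) (k : ℕ) :
    gbinom x k = (descPochhammer ℝ k).eval x / k.factorial := by
  rw [gbinom, descPochhammer_eval_eq_prod_range]

lemma gbinom_eq_ringChoose (x : ℝ) (k : ℕ) : gbinom x k = Ring.choose x k := by
  rw [gbinom_eq_descPochhammer, Ring.choose_eq_smul, smul_eq_mul, div_eq_inv_mul,
    ← Polynomial.aeval_eq_smeval, Polynomial.aeval_def, ← Polynomial.eval_map, descPochhammer_map]

lemma F_zero (x : ℝ) : F 0 x = 1 := by simp [F, gbinom]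

lemma F_one (x : ℝ) : F 1 x = x := by simp [F, gbinom]

lemma F_succ_add_half_sub (k : ℕ) (x : ℝ) :
    F (k + 1) (x + 1 / 2) - F (k + 1) (x - 1 / 2) = F k x := by
  have hright : x + 1 / 2 + (((k + 1 : ℕ) : ℝ) - 1) / 2 = x + ((k : ℝ) - 1) / 2 + 1 := by
    push_cast; ring
  have hleft : x - 1 / 2 + (((k + 1 : ℕ) : ℝ) - 1) / 2 = x + ((k : ℝ) - 1) / 2 := by
    push_cast; ring
  rw [F, F, F, hright, hleft]
  simp only [gbinom_eq_ringChoose, Ring.choose_succ_succ, add_sub_cancel_right]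

lemma exists_polynomial_eval_eq_F (k : ℕ) : ∃ p : ℝ[X], ∀ x, p.eval x = F k x := by
  refine ⟨Polynomial.C (k.factorial : ℝ)⁻¹ *
    (descPochhammer ℝ k).comp (Polynomial.X + Polynomial.C (((k : ℝ) - 1) / 2)), fun x ↦ ?_⟩
  simp [F, gbinom_eq_descPochhammer, div_eq_inv_mul]

/-- The generating function `∑ₖ F_k(x) Xᵏ`. -/
def genF (x : ℝ) : ℝ⟦X⟧ := PowerSeries.mk fun k ↦ F k x

@[simp] lemma coeff_genF (k : ℕ) (x : ℝ) : PowerSeries.coeff k (genF x) = F k x :=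
  PowerSeries.coeff_mk _ _

@[simp] lemma constantCoeff_genF (x : ℝ) : PowerSeries.constantCoeff (genF x) = 1 := by
  rw [← PowerSeries.coeff_zero_eq_constantCoeff_apply, coeff_genF, F_zero]

lemma genF_add_half_sub (x : ℝ) :
    genF (x + 1 / 2) - genF (x - 1 / 2) = PowerSeries.X * genF x := by
  ext k
  cases k with
  | zero => simp
  | succ k => simp only [map_sub, coeff_genF, F_succ_add_half_sub, PowerSeries.coeff_succ_X_mul]

lemma genF_add_mul_genF_zero (x y : ℝ) : genF (x + y) * genF 0 = genF x * genF y := by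
  choose p hp using exists_polynomial_eval_eq_F
  refine sub_eq_zero.1 <| eq_zero_of_centralDiff_eq_X_mul
    (Φ := fun x ↦ genF (x + y) * genF 0 - genF x * genF y) (fun n ↦ ?_) (fun x ↦ ?_) (by ring_nf) x
  · refine ⟨∑ ij ∈ antidiagonal n,
      ((p ij.1).comp (Polynomial.X + Polynomial.C y) * Polynomial.C (F ij.2 0) -
        p ij.1 * Polynomial.C (F ij.2 y)), fun x ↦ ?_⟩
    simp [Polynomial.eval_finsetSum, hp, PowerSeries.coeff_mul]
  · have hx := genF_add_half_sub x
    have hxy := genF_add_half_sub (x + y)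
    rw [add_right_comm, add_sub_right_comm] at hxy
    linear_combination genF 0 * hxy - genF y * hx

/-- The multiplier `e_h` by which `genF` changes under translation by `h`. -/
def shiftSeries (h : ℝ) : ℝ⟦X⟧ := genF h * (genF 0)⁻¹

lemma shiftSeries_mul_genF_zero (h : ℝ) : shiftSeries h * genF 0 = genF h := by
  rw [shiftSeries, mul_assoc, PowerSeries.inv_mul_cancel _ (by simp), mul_one]

lemma genF_add (x h : ℝ) : genF (x + h) = shiftSeries h * genF x := by
  have hunit : genF 0 * (genF 0)⁻¹ = 1 := PowerSeries.mul_inv_cancel _ (by simp)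
  rw [shiftSeries]
  linear_combination (genF 0)⁻¹ * genF_add_mul_genF_zero x h - genF (x + h) * hunit

@[simp] lemma shiftSeries_zero : shiftSeries 0 = 1 :=
  PowerSeries.mul_inv_cancel _ (by simp)

lemma shiftSeries_add (g h : ℝ) : shiftSeries (g + h) = shiftSeries g * shiftSeries h := by
  rw [shiftSeries, genF_add, mul_assoc, ← shiftSeries, mul_comm]

lemma shiftSeries_half_sub : shiftSeries (1 / 2) - shiftSeries (-(1 / 2)) = PowerSeries.X := by
  have hdiff := genF_add_half_sub 0
  rw [zero_add, zero_sub, ← shiftSeries_mul_genF_zero, ← shiftSeries_mul_genF_zero (-(1 / 2)),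
    ← sub_mul] at hdiff
  exact mul_right_cancel₀ (fun h ↦ by simpa [h] using constantCoeff_genF 0) hdiff

@[simp] lemma constantCoeff_shiftSeries (h : ℝ) :
    PowerSeries.constantCoeff (shiftSeries h) = 1 := by
  simp [shiftSeries]

@[simp] lemma coeff_one_shiftSeries (h : ℝ) : PowerSeries.coeff 1 (shiftSeries h) = h := by
  have hcoeff := congrArg (PowerSeries.coeff 1) (shiftSeries_mul_genF_zero h)
  simpa [PowerSeries.coeff_one_mul, F_one] using hcoeff

/-! ### The generating function of the polynomials `Z_k` -/

/-- The generating function `∑ₖ Xᵏ ∑ₗ cˡ F_{k-l}(x) F_l(y)`, which is that of the `Z_k(x, y)` for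
`c = i` and that of their complex conjugates for `c = -i`. -/
def genZ (c : ℂ) (x y : ℝ) : ℂ⟦X⟧ :=
  PowerSeries.rescale c (PowerSeries.map Complex.ofRealHom (genF y)) *
    PowerSeries.map Complex.ofRealHom (genF x)

/-- The multiplier by which `genZ c` changes under translation by `(g, h)`. -/
def planarShift (c : ℂ) (g h : ℝ) : ℂ⟦X⟧ :=
  PowerSeries.rescale c (PowerSeries.map Complex.ofRealHom (shiftSeries h)) *
    PowerSeries.map Complex.ofRealHom (shiftSeries g)

lemma coeff_genZ (c : ℂ) (k : ℕ) (x y : ℝ) :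
    PowerSeries.coeff k (genZ c x y) =
      ∑ l ∈ range (k + 1), c ^ l * (F (k - l) x : ℂ) * (F l y : ℂ) := by
  rw [genZ, PowerSeries.coeff_mul, Nat.sum_antidiagonal_eq_sum_range_succ_mk]
  simp [mul_right_comm]

lemma coeff_genZ_I (k : ℕ) (x y : ℝ) : PowerSeries.coeff k (genZ Complex.I x y) = Z k x y :=
  coeff_genZ _ _ _ _

lemma coeff_genZ_neg_I (k : ℕ) (x y : ℝ) :
    PowerSeries.coeff k (genZ (-Complex.I) x y) = (starRingEnd ℂ) (Z k x y) := by
  simp [coeff_genZ, Z]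

lemma genZ_add (c : ℂ) (x y g h : ℝ) :
    genZ c (x + g) (y + h) = planarShift c g h * genZ c x y := by
  simp only [genZ, planarShift, genF_add, map_mul]
  ring

@[simp] lemma constantCoeff_genZ (c : ℂ) (x y : ℝ) :
    PowerSeries.constantCoeff (genZ c x y) = 1 := by
  simp only [genZ, map_mul, ← PowerSeries.coeff_zero_eq_constantCoeff_apply,
    PowerSeries.coeff_rescale, PowerSeries.coeff_map]
  simp [F_zero]

@[simp] lemma constantCoeff_planarShift (c : ℂ) (g h : ℝ) :
    PowerSeries.constantCoeff (planarShift c g h) = 1 := by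
  simp only [planarShift, map_mul, ← PowerSeries.coeff_zero_eq_constantCoeff_apply,
    PowerSeries.coeff_rescale, PowerSeries.coeff_map]
  simp

lemma coeff_one_planarShift (c : ℂ) (g h : ℝ) :
    PowerSeries.coeff 1 (planarShift c g h) = g + c * h := by
  simp [planarShift, PowerSeries.coeff_mul, Finset.Nat.antidiagonal_succ]

lemma planarShift_zero_right (c : ℂ) (g : ℝ) :
    planarShift c g 0 = PowerSeries.map Complex.ofRealHom (shiftSeries g) := by
  simp [planarShift]

lemma planarShift_zero_left (c : ℂ) (h : ℝ) :
    planarShift c 0 h = PowerSeries.rescale c (planarShift c h 0) := by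
  simp [planarShift]

lemma planarShift_add (c : ℂ) (g h g' h' : ℝ) :
    planarShift c (g + g') (h + h') = planarShift c g h * planarShift c g' h' := by
  simp only [planarShift, shiftSeries_add, map_mul]
  ring

lemma planarShift_half_sub (c : ℂ) :
    planarShift c (1 / 2) 0 - planarShift c (-(1 / 2)) 0 = PowerSeries.X := by
  simp only [planarShift_zero_right, ← map_sub, shiftSeries_half_sub, PowerSeries.map_X]

lemma planarShift_zero_half_sub (c : ℂ) :
    planarShift c 0 (1 / 2) - planarShift c 0 (-(1 / 2)) = PowerSeries.C c * PowerSeries.X := by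
  rw [planarShift_zero_left, planarShift_zero_left, ← map_sub, planarShift_half_sub,
    PowerSeries.rescale_X]

/-! ### Two-variable generating functions and the random walk -/

/-- `f ↦ f(s)`, where the two-variable power series in `s` and `t` are encoded in `ℂ[w]⟦X⟧` through
`s = wX` and `t = X`, so that divisibility by powers of `X` measures the total degree. -/
def seriesInS : ℂ⟦X⟧ →+* ℂ[X]⟦X⟧ :=
  (PowerSeries.rescale Polynomial.X).comp (PowerSeries.map Polynomial.C)

/-- `f ↦ f(t)`, in the encoding of `seriesInS`. -/
def seriesInT : ℂ⟦X⟧ →+* ℂ[X]⟦X⟧ := PowerSeries.map Polynomial.C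

/-- The real part of the coefficient of `sᵏ tᵏ`, in the encoding of `seriesInS`. -/
def diagCoeffRe (k : ℕ) : ℂ[X]⟦X⟧ →ₗ[ℝ] ℝ :=
  Complex.reLm ∘ₗ (Polynomial.lcoeff ℂ k).restrictScalars ℝ ∘ₗ
    (PowerSeries.coeff (2 * k)).restrictScalars ℝ

lemma coeff_seriesInS_mul_seriesInT (n : ℕ) (f g : ℂ⟦X⟧) :
    PowerSeries.coeff n (seriesInS f * seriesInT g) = ∑ ab ∈ antidiagonal n,
      Polynomial.C (PowerSeries.coeff ab.1 f * PowerSeries.coeff ab.2 g) * Polynomial.X ^ ab.1 := by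
  rw [PowerSeries.coeff_mul]
  refine sum_congr rfl fun ab _ ↦ ?_
  simp only [seriesInS, seriesInT, RingHom.comp_apply, PowerSeries.coeff_rescale,
    PowerSeries.coeff_map, map_mul]
  ring

lemma coeff_two_seriesInS_mul_seriesInT (f g : ℂ⟦X⟧) :
    PowerSeries.coeff 2 (seriesInS f * seriesInT g) =
      Polynomial.C (PowerSeries.constantCoeff f * PowerSeries.coeff 2 g) +
        Polynomial.C (PowerSeries.coeff 1 f * PowerSeries.coeff 1 g) * Polynomial.X +
        Polynomial.C (PowerSeries.coeff 2 f * PowerSeries.constantCoeff g) * Polynomial.X ^ 2 := by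
  rw [coeff_seriesInS_mul_seriesInT]
  simp [Finset.Nat.antidiagonal_succ, add_assoc]

lemma diagCoeffRe_apply (k : ℕ) (Φ : ℂ[X]⟦X⟧) :
    diagCoeffRe k Φ = ((PowerSeries.coeff (2 * k) Φ).coeff k).re := rfl

lemma diagCoeffRe_seriesInS_mul_seriesInT (k : ℕ) (f g : ℂ⟦X⟧) :
    diagCoeffRe k (seriesInS f * seriesInT g) =
      (PowerSeries.coeff k f * PowerSeries.coeff k g).re := by
  rw [diagCoeffRe_apply, coeff_seriesInS_mul_seriesInT, Polynomial.finsetSum_coeff,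
    sum_eq_single_of_mem (k, k) (by simp [two_mul]), Polynomial.coeff_C_mul_X_pow, if_pos rfl]
  intro ab hab hne
  rw [Polynomial.coeff_C_mul_X_pow, if_neg]
  rintro rfl
  exact hne (Prod.ext rfl (by have := mem_antidiagonal.1 hab; simp only; omega))

lemma seriesInS_X_mul_seriesInT_X :
    seriesInS PowerSeries.X * seriesInT PowerSeries.X =
      PowerSeries.C Polynomial.X * PowerSeries.X ^ 2 := by
  simp [seriesInS, seriesInT, PowerSeries.rescale_X, sq, mul_assoc]

lemma diagCoeffRe_seriesInS_X_mul_seriesInT_X_pow_mul (j m : ℕ) (Φ : ℂ[X]⟦X⟧) :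
    diagCoeffRe (j + m) ((seriesInS PowerSeries.X * seriesInT PowerSeries.X) ^ m * Φ) =
      diagCoeffRe j Φ := by
  rw [diagCoeffRe_apply, seriesInS_X_mul_seriesInT_X, mul_pow, ← map_pow, ← pow_mul, mul_assoc,
    PowerSeries.coeff_C_mul, mul_add, PowerSeries.coeff_X_pow_mul, Polynomial.coeff_X_pow_mul,
    diagCoeffRe_apply]

/-- The generating function `∑ Z_k(x, y) conj(Z_l(x, y)) sᵏ tˡ`. -/
def genNormSq (x y : ℝ) : ℂ[X]⟦X⟧ :=
  seriesInS (genZ Complex.I x y) * seriesInT (genZ (-Complex.I) x y)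

/-- The multiplier by which `genNormSq` changes under translation by `(g, h)`. -/
def stepSymbol (g h : ℝ) : ℂ[X]⟦X⟧ :=
  seriesInS (planarShift Complex.I g h) * seriesInT (planarShift (-Complex.I) g h)

/-- The factor by which averaging over the four translates by `(±h, 0)` and `(0, ±h)` multiplies
`genNormSq`. -/
def walkSymbol (h : ℝ) : ℂ[X]⟦X⟧ :=
  (4 : ℝ)⁻¹ • (stepSymbol h 0 + stepSymbol (-h) 0 + stepSymbol 0 h + stepSymbol 0 (-h))

lemma four_mul_walkSymbol (h : ℝ) : 4 * walkSymbol h =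
    stepSymbol h 0 + stepSymbol (-h) 0 + stepSymbol 0 h + stepSymbol 0 (-h) := by
  rw [walkSymbol, mul_smul_comm, inv_smul_eq_iff₀ four_ne_zero, ofNat_smul_eq_nsmul, nsmul_eq_mul,
    Nat.cast_ofNat]

lemma genNormSq_add (x y g h : ℝ) :
    genNormSq (x + g) (y + h) = stepSymbol g h * genNormSq x y := by
  simp only [genNormSq, stepSymbol, genZ_add, map_mul]
  ring

lemma diagCoeffRe_genNormSq (k : ℕ) (x y : ℝ) :
    diagCoeffRe k (genNormSq x y) = ‖Z k x y‖ ^ 2 := by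
  rw [genNormSq, diagCoeffRe_seriesInS_mul_seriesInT, coeff_genZ_I, coeff_genZ_neg_I,
    Complex.mul_conj, Complex.ofReal_re, Complex.normSq_eq_norm_sq]

lemma constantCoeff_genNormSq (x y : ℝ) : PowerSeries.constantCoeff (genNormSq x y) = 1 := by
  rw [← PowerSeries.coeff_zero_eq_constantCoeff_apply, genNormSq, coeff_seriesInS_mul_seriesInT]
  simp

lemma stepSymbol_two_mul_add_neg (g h : ℝ) :
    stepSymbol (2 * g) (2 * h) + stepSymbol (-(2 * g)) (-(2 * h)) =
      seriesInS (planarShift Complex.I g h - planarShift Complex.I (-g) (-h)) *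
          seriesInT (planarShift (-Complex.I) g h - planarShift (-Complex.I) (-g) (-h)) *
          (stepSymbol g h + stepSymbol (-g) (-h)) +
        seriesInS (planarShift Complex.I g h - planarShift Complex.I (-g) (-h)) ^ 2 +
        seriesInT (planarShift (-Complex.I) g h - planarShift (-Complex.I) (-g) (-h)) ^ 2 + 2 := by
  have planarShift_mul_neg (c : ℂ) : planarShift c g h * planarShift c (-g) (-h) = 1 := by
    rw [← planarShift_add, add_neg_cancel, add_neg_cancel]
    simp [planarShift]
  have stepSymbol_two_mul (g h : ℝ) : stepSymbol (2 * g) (2 * h) = stepSymbol g h ^ 2 := by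
    simp only [stepSymbol, two_mul, planarShift_add, map_mul]
    ring
  rw [← mul_neg, ← mul_neg, stepSymbol_two_mul, stepSymbol_two_mul]
  simp only [stepSymbol, map_sub]
  refine mul_sq_add_mul_sq_of_mul_eq_one ?_ ?_ <;>
    rw [← map_mul, planarShift_mul_neg, map_one]

lemma walkSymbol_one_sub_one :
    walkSymbol 1 - 1 =
      seriesInS PowerSeries.X * seriesInT PowerSeries.X * walkSymbol (1 / 2) := by
  have hhor := stepSymbol_two_mul_add_neg (1 / 2) 0
  have hver := stepSymbol_two_mul_add_neg 0 (1 / 2)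
  have hI : (PowerSeries.C (Polynomial.C Complex.I) : ℂ[X]⟦X⟧) ^ 2 = -1 := by
    simp [← map_pow]
  have seriesInS_C :
      seriesInS (PowerSeries.C Complex.I) = PowerSeries.C (Polynomial.C Complex.I) := by
    rw [seriesInS, RingHom.comp_apply, PowerSeries.map_C]
    ext n : 1
    rw [PowerSeries.coeff_rescale, PowerSeries.coeff_C]
    split_ifs with hn <;> simp [hn]
  have seriesInT_C :
      seriesInT (PowerSeries.C (-Complex.I)) = -PowerSeries.C (Polynomial.C Complex.I) := by
    simp [seriesInT]
  simp only [mul_zero, neg_zero, mul_one_div_cancel (two_ne_zero' ℝ), planarShift_half_sub,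
    planarShift_zero_half_sub, map_mul, seriesInS_C, seriesInT_C] at hhor hver
  have hfour : (4 : ℂ[X]⟦X⟧) ≠ 0 := by
    rw [← map_ofNat PowerSeries.C, PowerSeries.C_injective.ne_iff' (map_zero _)]
    norm_num
  refine mul_left_cancel₀ hfour ?_
  -- The half-step differences are `s`, `t` horizontally and `is`, `-it` vertically: both pairs have
  -- product `s t`, while the sum of all four squares vanishes.
  linear_combination four_mul_walkSymbol 1 + hhor + hver -
    seriesInS PowerSeries.X * seriesInT PowerSeries.X * four_mul_walkSymbol (1 / 2) +
    (seriesInS PowerSeries.X ^ 2 + seriesInT PowerSeries.X ^ 2 -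
      seriesInS PowerSeries.X * seriesInT PowerSeries.X *
        (stepSymbol 0 (1 / 2) + stepSymbol 0 (-(1 / 2)))) * hI

lemma sum_Sfin {M : Type*} [AddCommMonoid M] (f : ℤ × ℤ → M) :
    ∑ t ∈ Sfin, f t = f (1, 0) + f (-1, 0) + f (0, 1) + f (0, -1) := by
  simp [Sfin, add_assoc]

lemma Qk_eq_diagCoeffRe (k n : ℕ) :
    Qk k n = diagCoeffRe k (walkSymbol 1 ^ n * genNormSq 0 0) := by
  have hsum := sum_piFinset_map_sum (S := Sfin) (f := fun v : ℤ × ℤ ↦ genNormSq v.1 v.2)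
    (ψ := fun t : ℤ × ℤ ↦ stepSymbol t.1 t.2)
    (fun v t _ ↦ by simp only [Prod.fst_add, Prod.snd_add, Int.cast_add, genNormSq_add]) n
  have hwalk : ∑ t ∈ Sfin, stepSymbol t.1 t.2 = (4 : ℝ) • walkSymbol 1 := by
    rw [sum_Sfin, walkSymbol, smul_inv_smul₀ four_ne_zero]
    push_cast
    rfl
  calc Qk k n
      = (4 : ℝ)⁻¹ ^ n • diagCoeffRe k
          (∑ s ∈ Fintype.piFinset fun _ : Fin n ↦ Sfin,
            genNormSq (∑ i, s i).1 (∑ i, s i).2) := by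
        simp only [Qk, Q, map_sum, diagCoeffRe_genNormSq, smul_eq_mul]
    _ = diagCoeffRe k (walkSymbol 1 ^ n * genNormSq 0 0) := by
        rw [hsum, hwalk, ← map_smul, ← smul_mul_assoc, ← smul_pow,
          inv_smul_smul₀ four_ne_zero]
        simp

lemma a_add_eq_diagCoeffRe (j m : ℕ) :
    a (j + m) j = diagCoeffRe j (walkSymbol (1 / 2) ^ m * genNormSq 0 0) := by
  have hdiff := fwd_iterate_map_pow_mul (diagCoeffRe (j + m)).toAddMonoidHom (walkSymbol 1)
    (genNormSq 0 0) m
  simp only [LinearMap.toAddMonoidHom_coe, ← Qk_eq_diagCoeffRe] at hdiff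
  rw [a, Nat.add_sub_cancel_left, hdiff]
  simp only [pow_zero, one_mul]
  rw [walkSymbol_one_sub_one, mul_pow, mul_assoc,
    diagCoeffRe_seriesInS_X_mul_seriesInT_X_pow_mul]

lemma constantCoeff_stepSymbol (g h : ℝ) : PowerSeries.constantCoeff (stepSymbol g h) = 1 := by
  rw [← PowerSeries.coeff_zero_eq_constantCoeff_apply, stepSymbol, coeff_seriesInS_mul_seriesInT]
  simp

lemma coeff_one_stepSymbol (g h : ℝ) : PowerSeries.coeff 1 (stepSymbol g h) =
    Polynomial.C (g - Complex.I * h) + Polynomial.C (g + Complex.I * h) * Polynomial.X := by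
  rw [stepSymbol, coeff_seriesInS_mul_seriesInT]
  simp [Finset.Nat.antidiagonal_succ, coeff_one_planarShift, sub_eq_add_neg]

/-- The terms `s²` and `t²` cancel between horizontal and vertical steps, since `(±i)² = -1`. -/
lemma coeff_two_stepSymbol_add (h : ℝ) :
    PowerSeries.coeff 2 (stepSymbol h 0) + PowerSeries.coeff 2 (stepSymbol 0 h) =
      2 * Polynomial.C ((h : ℂ) ^ 2) * Polynomial.X := by
  have coeff_two_zero_left (c : ℂ) : PowerSeries.coeff 2 (planarShift c 0 h) =
      c ^ 2 * (PowerSeries.coeff 2 (shiftSeries h) : ℝ) := by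
    simp [planarShift_zero_left, planarShift_zero_right]
  have coeff_two_zero_right (c : ℂ) : PowerSeries.coeff 2 (planarShift c h 0) =
      (PowerSeries.coeff 2 (shiftSeries h) : ℝ) := by
    simp [planarShift_zero_right]
  have hI : (Polynomial.C Complex.I : ℂ[X]) ^ 2 = -1 := by simp [← map_pow]
  simp only [stepSymbol, coeff_two_seriesInS_mul_seriesInT, constantCoeff_planarShift,
    coeff_one_planarShift, coeff_two_zero_left, coeff_two_zero_right, Complex.ofReal_zero,
    mul_zero, zero_add, add_zero, one_mul, mul_one, neg_sq, Complex.I_sq, map_mul, map_neg, map_one,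
    map_pow]
  linear_combination (-Polynomial.C (h : ℂ) ^ 2 * Polynomial.X) * hI

lemma four_mul_coeff_walkSymbol (n : ℕ) (h : ℝ) : 4 * PowerSeries.coeff n (walkSymbol h) =
    PowerSeries.coeff n (stepSymbol h 0) + PowerSeries.coeff n (stepSymbol (-h) 0) +
      PowerSeries.coeff n (stepSymbol 0 h) + PowerSeries.coeff n (stepSymbol 0 (-h)) := by
  simp only [← map_add, ← four_mul_walkSymbol, ← Nat.cast_ofNat (R := ℂ[X]),
    ← Nat.cast_ofNat (R := ℂ[X]⟦X⟧), ← nsmul_eq_mul, map_nsmul]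

lemma coeff_zero_walkSymbol (h : ℝ) : PowerSeries.coeff 0 (walkSymbol h) = 1 := by
  refine mul_left_cancel₀ (by norm_num : (4 : ℂ[X]) ≠ 0) ?_
  rw [four_mul_coeff_walkSymbol]
  simp only [PowerSeries.coeff_zero_eq_constantCoeff_apply, constantCoeff_stepSymbol]
  norm_num

lemma coeff_one_walkSymbol (h : ℝ) : PowerSeries.coeff 1 (walkSymbol h) = 0 := by
  refine mul_left_cancel₀ (by norm_num : (4 : ℂ[X]) ≠ 0) ?_
  rw [four_mul_coeff_walkSymbol]
  simp only [coeff_one_stepSymbol, Complex.ofReal_neg, Complex.ofReal_zero, mul_neg, mul_zero,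
    map_add, map_sub, map_neg, map_zero]
  ring

lemma coeff_two_walkSymbol (h : ℝ) :
    PowerSeries.coeff 2 (walkSymbol h) = Polynomial.C ((h : ℂ) ^ 2) * Polynomial.X := by
  have hneg := coeff_two_stepSymbol_add (-h)
  rw [Complex.ofReal_neg, neg_sq] at hneg
  refine mul_left_cancel₀ (by norm_num : (4 : ℂ[X]) ≠ 0) ?_
  linear_combination four_mul_coeff_walkSymbol 2 h + coeff_two_stepSymbol_add h + hneg

lemma exists_walkSymbol_sub_one_eq_X_sq_mul (h : ℝ) : ∃ ν : ℂ[X]⟦X⟧,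
    PowerSeries.constantCoeff ν = Polynomial.C ((h : ℂ) ^ 2) * Polynomial.X ∧
      walkSymbol h - 1 = PowerSeries.X ^ 2 * ν := by
  have hdvd : (PowerSeries.X ^ 2 : ℂ[X]⟦X⟧) ∣ walkSymbol h - 1 := by
    refine PowerSeries.X_pow_dvd_iff.2 fun n hn ↦ ?_
    interval_cases n
    · rw [map_sub, coeff_zero_walkSymbol, PowerSeries.coeff_zero_one, sub_self]
    · rw [map_sub, coeff_one_walkSymbol, PowerSeries.coeff_one, if_neg one_ne_zero, sub_zero]
  obtain ⟨ν, hν⟩ := hdvd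
  refine ⟨ν, ?_, hν⟩
  rw [← PowerSeries.coeff_zero_eq_constantCoeff_apply, ← PowerSeries.coeff_X_pow_mul ν 2 0, ← hν,
    map_sub, zero_add, coeff_two_walkSymbol, PowerSeries.coeff_one, if_neg two_ne_zero, sub_zero]

lemma diagCoeffRe_walkSymbol_sub_one_pow_mul_of_lt {i j : ℕ} (hij : j < i) (h : ℝ)
    (Φ : ℂ[X]⟦X⟧) : diagCoeffRe j ((walkSymbol h - 1) ^ i * Φ) = 0 := by
  obtain ⟨ν, -, hν⟩ := exists_walkSymbol_sub_one_eq_X_sq_mul h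
  rw [diagCoeffRe_apply, hν, mul_pow, ← pow_mul, mul_assoc, PowerSeries.coeff_X_pow_mul',
    if_neg (by omega), Polynomial.coeff_zero, Complex.zero_re]

lemma diagCoeffRe_walkSymbol_sub_one_pow_mul (j : ℕ) (h : ℝ) {Φ : ℂ[X]⟦X⟧}
    (hΦ : PowerSeries.constantCoeff Φ = 1) :
    diagCoeffRe j ((walkSymbol h - 1) ^ j * Φ) = (h ^ 2) ^ j := by
  obtain ⟨ν, hν₀, hν⟩ := exists_walkSymbol_sub_one_eq_X_sq_mul h
  rw [diagCoeffRe_apply, hν, mul_pow, ← pow_mul, mul_assoc, PowerSeries.coeff_X_pow_mul',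
    if_pos le_rfl, Nat.sub_self, PowerSeries.coeff_zero_eq_constantCoeff_apply, map_mul, map_pow,
    hΦ, hν₀, mul_one, mul_pow, ← map_pow, Polynomial.coeff_C_mul_X_pow, if_pos rfl]
  norm_cast

lemma a_add_eq_sum_choose_mul (j m : ℕ) :
    a (j + m) j = ∑ i ∈ range (j + 1),
      (m.choose i : ℝ) * diagCoeffRe j ((walkSymbol (1 / 2) - 1) ^ i * genNormSq 0 0) := by
  set term : ℕ → ℝ := fun i ↦
    m.choose i * diagCoeffRe j ((walkSymbol (1 / 2) - 1) ^ i * genNormSq 0 0) with hterm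
  have hchoose (i : ℕ) (hi : m + 1 ≤ i) : term i = 0 := by
    simp only [hterm, Nat.choose_eq_zero_of_lt hi, Nat.cast_zero, zero_mul]
  have hdegree (i : ℕ) (hi : j + 1 ≤ i) : term i = 0 := by
    simp only [hterm, diagCoeffRe_walkSymbol_sub_one_pow_mul_of_lt hi, mul_zero]
  calc a (j + m) j
      = diagCoeffRe j (walkSymbol (1 / 2) ^ m * genNormSq 0 0) := a_add_eq_diagCoeffRe j m
    _ = diagCoeffRe j (∑ i ∈ range (m + 1),
          m.choose i • ((walkSymbol (1 / 2) - 1) ^ i * genNormSq 0 0)) := by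
        conv_lhs => rw [← sub_add_cancel (walkSymbol (1 / 2)) 1, add_pow, sum_mul]
        simp only [one_pow, mul_one, nsmul_eq_mul, mul_comm _ (Nat.cast _), mul_assoc]
    _ = ∑ i ∈ range (m + 1), term i := by
        rw [map_sum]
        exact sum_congr rfl fun i _ ↦ by rw [map_nsmul, nsmul_eq_mul]
    _ = ∑ i ∈ range (j + 1), term i := by
        rw [← eventually_constant_sum hchoose (le_max_left _ (j + 1)),
          eventually_constant_sum hdegree (le_max_right _ _)]

theorem akj_main_coefficient (j : ℕ) :
    ∃ P : Polynomial ℝ, P.degree < (j : WithBot ℕ) ∧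
      ∀ k : ℕ, j ≤ k →
        a k j = (1 / (Nat.factorial j : ℝ)) * ((k : ℝ) / 4) ^ j + P.eval (k : ℝ) := by
  obtain ⟨P, hdeg, hP⟩ := exists_polynomial_eval_eq_sum_choose_sub_mul j fun i ↦
    diagCoeffRe j ((walkSymbol (1 / 2) - 1) ^ i * genNormSq 0 0)
  refine ⟨P, Polynomial.mem_degreeLT.1 hdeg, fun k hjk ↦ ?_⟩
  have ha := a_add_eq_sum_choose_mul j (k - j)
  rw [Nat.add_sub_cancel' hjk, hP k hjk,
    diagCoeffRe_walkSymbol_sub_one_pow_mul j _ (constantCoeff_genNormSq 0 0)] at ha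
  rw [ha, div_pow]
  ring
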